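/- Almost sure simplicity of the many-body spectrum: let Λ be a finite rectangular box in ℤ^ν with N = |Λ| sites and h₀ its graph Laplacian. For Lebesgue-almost every k ∈ (0,∞)^Λ, the map ℕ₀^N → ℝ, α ↦ Σ_{j=1}^N γ_j(k)(2α_j + 1), is injective, where γ₁(k),…,γ_N(k) are the positive square roots of the eigenvalues of h₀ + diag(k) (counted with multiplicity). Equivalently, for almost every k the family (γ₁(k),…,γ_N(k)) is linearly independent over ℚ; this expresses that the oscillator Hamiltonian H(k) = Σ_x p_x² + q^T(h₀+k)q has simple spectrum for almost every k. -/

import Mathlib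

open MeasureTheory Matrix Finset

noncomputable section

namespace OscLoc

attribute [local instance 10] Classical.propDecidable

/-- The `ℓ¹`-distance on `ℤ^ν`. -/
def dist1 {ν : ℕ} (x y : Fin ν → ℤ) : ℕ := ∑ i, (x i - y i).natAbs

theorem dist1_comm {ν : ℕ} (x y : Fin ν → ℤ) : dist1 x y = dist1 y x :=
  Finset.sum_congr rfl fun i _ => by omega

variable {ν : ℕ}

/-- The sites of the rectangular box `[a₁,b₁] × … × [a_ν,b_ν] ⊂ ℤ^ν`. -/
abbrev Box (a b : Fin ν → ℤ) : Type _ := {x : Fin ν → ℤ // x ∈ Finset.Icc a b}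

variable (a b : Fin ν → ℤ)

/-- The graph Laplacian `h₀ = h_{0,Λ}` on `ℓ²(Λ)`, as a matrix. -/
def h0 : Matrix (Box a b) (Box a b) ℝ := fun x y =>
  if x = y then ((Finset.univ.filter fun z : Box a b => dist1 x.1 z.1 = 1).card : ℝ)
  else if dist1 x.1 y.1 = 1 then -1 else 0

/-- The effective one-particle Anderson Hamiltonian `h_Λ = h₀ + k`. -/
def effH (k : Box a b → ℝ) : Matrix (Box a b) (Box a b) ℝ := h0 a b + Matrix.diagonal k

theorem h0_isHermitian : (h0 a b).IsHermitian := by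
  show (h0 a b)ᴴ = h0 a b
  ext x y
  simp only [Matrix.conjTranspose_apply, star_trivial, h0]
  by_cases hxy : x = y
  · subst hxy; rfl
  · simp [hxy, Ne.symm hxy, dist1_comm x.1 y.1]

theorem effH_isHermitian (k : Box a b → ℝ) : (effH a b k).IsHermitian :=
  (h0_isHermitian a b).add (Matrix.isHermitian_diagonal k)

variable (k : Box a b → ℝ)

/-- The eigenvalues `γ_j²` of `h_Λ = h₀ + k`, counted with multiplicity. -/
def eigval : Box a b → ℝ := (effH_isHermitian a b k).eigenvalues

/-- `γ_j`, the positive square roots of the eigenvalues of `h_Λ`. -/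
def gam (j : Box a b) : ℝ := Real.sqrt (eigval a b k j)

section Lines

open Polynomial Filter Topology

variable {ι : Type*}

theorem countable_of_eventually_notMem {S : Set ℝ}
    (h : ∀ x ∈ S, ∀ᶠ z in 𝓝[≠] x, z ∉ S) : S.Countable := by
  have hd : DiscreteTopology S := by
    rw [discreteTopology_subtype_iff]
    intro x hx
    rw [← disjoint_iff]
    exact disjoint_principal_right.2 (h x hx)
  have : Countable S := TopologicalSpace.separableSpace_iff_countable.1 inferInstance
  exact Set.countable_coe_iff.1 this

theorem eq_zero_of_forall_sum_mul_pow_eq_zero [Fintype ι] [DecidableEq ι] {x d : ι → ℝ}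
    (hx : Function.Injective x) (h : ∀ i : ℕ, ∑ j, d j * x j ^ i = 0) : d = 0 := by
  have hP (P : ℝ[X]) : ∑ j, d j * P.eval (x j) = 0 := by
    simp_rw [Polynomial.eval_eq_sum_range, Finset.mul_sum]
    rw [Finset.sum_comm]
    refine Finset.sum_eq_zero fun i _ => ?_
    have := congrArg (P.coeff i * ·) (h i)
    simp only [Finset.mul_sum, mul_zero] at this
    rw [← this]
    exact Finset.sum_congr rfl fun j _ => by ring
  funext j
  have h1 := hP (∏ i ∈ Finset.univ.erase j, (X - C (x i)))
  rw [Finset.sum_eq_single j] at h1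
  · refine (mul_eq_zero.1 h1).resolve_right ?_
    simp only [eval_prod, eval_sub, eval_X, eval_C]
    refine Finset.prod_ne_zero_iff.2 fun i hi => sub_ne_zero.2 fun hij => ?_
    exact Finset.ne_of_mem_erase hi (hx hij).symm
  · intro i _ hij
    rw [eval_prod, Finset.prod_eq_zero (Finset.mem_erase.2 ⟨hij, Finset.mem_univ i⟩) (by simp),
      mul_zero]
  · simp

/-- Square roots of distinct shifts satisfy a given nontrivial linear relation at only countably
many points. -/
theorem countable_sum_mul_sqrt_add_eq_zero [Fintype ι] [DecidableEq ι] {μ c : ι → ℝ}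
    (hμ : Function.Injective μ) (hc : c ≠ 0) :
    {s : ℝ | (∀ j, 0 ≤ μ j + s) ∧ ∑ j, c j * √(μ j + s) = 0}.Countable := by
  set f : ℕ → ℝ → ℝ := fun i s => ∑ j, c j * (μ j + s) ^ ((1 / 2 : ℝ) - i) with hf
  set Z : ℕ → Set ℝ := fun i => {s | (∀ j, 0 < μ j + s) ∧ f i s = 0} with hZ
  have hderiv (i : ℕ) (s : ℝ) (hs : ∀ j, 0 < μ j + s) :
      HasDerivAt (f i) (((1 / 2 : ℝ) - i) * f (i + 1) s) s := by
    simp only [hf, Finset.mul_sum]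
    refine HasDerivAt.fun_sum fun j _ => ?_
    have h1 : HasDerivAt (fun s => μ j + s) 1 s := (hasDerivAt_id s).const_add _
    have h2 := (h1.rpow_const (p := (1 / 2 : ℝ) - i) (Or.inl (hs j).ne')).const_mul (c j)
    refine h2.congr_deriv ?_
    rw [show (1 / 2 : ℝ) - ((i + 1 : ℕ) : ℝ) = 1 / 2 - i - 1 by push_cast; ring]
    ring
  have hstep (i : ℕ) : (Z i \ Z (i + 1)).Countable := by
    refine countable_of_eventually_notMem fun s hs => ?_
    have hne : ((1 / 2 : ℝ) - i) * f (i + 1) s ≠ 0 := by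
      refine mul_ne_zero (fun h => ?_) fun h => hs.2 ⟨hs.1.1, h⟩
      have h2 : (1 : ℝ) = ((2 * i : ℕ) : ℝ) := by push_cast; linarith
      have h3 : 1 = 2 * i := by exact_mod_cast h2
      omega
    filter_upwards [(hderiv i s hs.1.1).eventually_ne hne (c := 0)] with z hz hzZ
    exact hz hzZ.1.2
  have hinter : ⋂ i, Z i = ∅ := by
    refine Set.eq_empty_of_forall_notMem fun s hs => hc ?_
    rw [Set.mem_iInter] at hs
    have hpos := (hs 0).1
    have hd : (fun j => c j * √(μ j + s)) = 0 := by
      refine eq_zero_of_forall_sum_mul_pow_eq_zero (x := fun j => (μ j + s)⁻¹) ?_ fun i => ?_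
      · intro j j' h
        exact hμ (add_right_cancel (inv_injective h))
      · rw [← (hs i).2]
        refine Finset.sum_congr rfl fun j _ => ?_
        rw [Real.rpow_sub (hpos j), Real.rpow_natCast, ← Real.sqrt_eq_rpow]
        simp [div_eq_mul_inv, mul_assoc]
    funext j
    exact (mul_eq_zero.1 (congrFun hd j)).resolve_right (Real.sqrt_pos.2 (hpos j)).ne'
  have hZ0 : (Z 0).Countable := by
    refine (Set.countable_iUnion hstep).mono fun s hs => ?_
    by_contra hcon
    simp only [Set.mem_iUnion, Set.mem_sdiff, not_exists, not_and, not_not] at hcon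
    have : s ∈ ⋂ i, Z i := Set.mem_iInter.2 fun i => by
      induction i with
      | zero => exact hs
      | succ i ih => exact hcon i ih
    rw [hinter] at this
    exact this
  refine (hZ0.union (Set.finite_range fun j => -μ j).countable).mono fun s hs => ?_
  by_cases h : ∃ j, μ j + s = 0
  · obtain ⟨j, hj⟩ := h
    exact Or.inr ⟨j, by simp only; linarith⟩
  · push Not at h
    refine Or.inl ⟨fun j => (hs.1 j).lt_of_ne' (h j), ?_⟩
    rw [← hs.2]
    simp [hf, Real.sqrt_eq_rpow]

theorem ae_notMem_of_countable_line [Fintype ι] {S : Set (ι → ℝ)} (hS : MeasurableSet S)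
    (v : ι → ℝ) (h : ∀ k, {t : ℝ | k + t • v ∈ S}.Countable) :
    ∀ᵐ k ∂(volume : Measure (ι → ℝ)), k ∉ S := by
  refine ae_mem_of_ae_add_linearMap_mem (LinearMap.toSpanSingleton ℝ (ι → ℝ) v) volume volume
    hS.compl fun k => ?_
  exact (h k).ae_notMem volume

end Lines

section Spectrum

open Polynomial

variable {ι : Type*} [Fintype ι]

theorem isClosed_not_injective : IsClosed {g : ι → ℝ | ¬ Function.Injective g} := by
  have : {g : ι → ℝ | ¬ Function.Injective g} =
      ⋃ i, ⋃ j, {g : ι → ℝ | g i = g j ∧ i ≠ j} := by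
    ext g
    simp [Function.Injective]
  rw [this]
  refine isClosed_iUnion_of_finite fun i => isClosed_iUnion_of_finite fun j => ?_
  exact (isClosed_eq (continuous_apply i) (continuous_apply j)).inter isClosed_const

variable [DecidableEq ι]

theorem charpoly_eq_prod_iff_forall_det {A : Matrix ι ι ℝ} {g : ι → ℝ} :
    A.charpoly = ∏ j, (X - C (g j)) ↔
      ∀ x : ℝ, (Matrix.scalar ι x - A).det = ∏ j, (x - g j) := by
  constructor
  · intro h x
    rw [← Matrix.eval_charpoly, h, eval_prod]
    simp
  · intro h
    refine Polynomial.funext fun x => ?_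
    rw [Matrix.eval_charpoly, h, eval_prod]
    simp

theorem charpoly_smul_eq_prod {A : Matrix ι ι ℝ} {g : ι → ℝ} {t : ℝ} (ht : t ≠ 0)
    (h : A.charpoly = ∏ j, (X - C (g j))) :
    (t • A).charpoly = ∏ j, (X - C (t * g j)) := by
  rw [charpoly_eq_prod_iff_forall_det] at h ⊢
  intro x
  have h1 : Matrix.scalar ι x - t • A = t • (Matrix.scalar ι (t⁻¹ * x) - A) := by
    ext i j
    by_cases hij : i = j
    · subst hij; simp [mul_sub, ht]
    · simp [hij]
  rw [h1, Matrix.det_smul, h, ← Finset.card_univ, ← Finset.prod_const, ← Finset.prod_mul_distrib]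
  refine Finset.prod_congr rfl fun j _ => ?_
  field_simp

theorem charpoly_add_scalar_eq_prod {A : Matrix ι ι ℝ} {g : ι → ℝ} (s : ℝ)
    (h : A.charpoly = ∏ j, (X - C (g j))) :
    (A + Matrix.scalar ι s).charpoly = ∏ j, (X - C (g j + s)) := by
  rw [charpoly_eq_prod_iff_forall_det] at h ⊢
  intro x
  have h1 : Matrix.scalar ι x - (A + Matrix.scalar ι s) = Matrix.scalar ι (x - s) - A := by
    rw [map_sub]; abel
  rw [h1, h]
  exact Finset.prod_congr rfl fun j _ => by ring

/-- The potentials `k` such that `M + diag k` has, in some enumeration, a spectrum in `Γ`. -/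
def specSet (M : Matrix ι ι ℝ) (Γ : Set (ι → ℝ)) : Set (ι → ℝ) :=
  {k | ∃ g ∈ Γ, (M + Matrix.diagonal k).charpoly = ∏ j, (X - C (g j))}

theorem measurableSet_specSet (M : Matrix ι ι ℝ) {Γ : Set (ι → ℝ)} (hΓ : IsClosed Γ) :
    MeasurableSet (specSet M Γ) := by
  have hcl : IsClosed {p : (ι → ℝ) × (ι → ℝ) |
      p.2 ∈ Γ ∧ (M + Matrix.diagonal p.1).charpoly = ∏ j, (X - C (p.2 j))} := by
    simp only [charpoly_eq_prod_iff_forall_det, Set.ofPred_and, Set.ofPred_forall]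
    refine (hΓ.preimage continuous_snd).inter
      (isClosed_iInter fun x => isClosed_eq ?_ (by fun_prop))
    exact (continuous_const.sub
      (continuous_const.add continuous_fst.matrix_diagonal)).matrix_det
  have himg : specSet M Γ = Prod.fst '' {p : (ι → ℝ) × (ι → ℝ) |
      p.2 ∈ Γ ∧ (M + Matrix.diagonal p.1).charpoly = ∏ j, (X - C (p.2 j))} := by
    ext k
    simp [specSet]
  obtain ⟨K, hK, hKU⟩ :=
    (isSigmaCompact_univ.of_isClosed_subset hcl (Set.subset_univ _)).image continuous_fst
  rw [himg, ← hKU]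
  exact MeasurableSet.iUnion fun n => (hK n).measurableSet

/-- If `D` has simple spectrum, then so does `s • A + D` for all but finitely many `s`. -/
theorem finite_not_separable_charpoly_smul_add [Nonempty ι] (A D : Matrix ι ι ℝ)
    (hD : D.charpoly.Separable) : {s : ℝ | ¬ (s • A + D).charpoly.Separable}.Finite := by
  set P : Matrix ι ι ℝ[X] := (X : ℝ[X]) • A.map C + D.map C with hP
  set n := Fintype.card ι
  set r : ℝ[X] := resultant P.charpoly (derivative P.charpoly) n (n - 1) with hr
  have hmap (s : ℝ) : P.charpoly.map (evalRingHom s) = (s • A + D).charpoly := by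
    rw [← Matrix.charpoly_map]
    congr 1
    ext i j
    simp [hP]
    exact mul_comm _ _
  have heval (s : ℝ) : r.eval s = 0 ↔ ¬ (s • A + D).charpoly.Separable := by
    have hdeg : (s • A + D).charpoly.natDegree = n := Matrix.charpoly_natDegree_eq_dim _
    have hdeg' : (derivative (s • A + D).charpoly).natDegree = n - 1 := by
      rw [natDegree_derivative, hdeg]
    have h1 : r.eval s = resultant (s • A + D).charpoly (derivative (s • A + D).charpoly) := by
      rw [hdeg, hdeg', ← hmap, derivative_map, resultant_map_map]
      rfl
    rw [h1, resultant_eq_zero_iff]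
    simp [Polynomial.Separable, (Matrix.charpoly_monic (s • A + D)).ne_zero]
  have hr0 : r ≠ 0 := by
    intro h0
    have := (heval 0).1 (by simp [h0])
    simp [hD] at this
  refine (r.roots.toFinset.finite_toSet).subset fun s hs => ?_
  simpa [hr0] using (heval s).2 hs

/-- For almost every potential, `M + diag k` has simple spectrum. -/
theorem ae_notMem_specSet_not_injective (M : Matrix ι ι ℝ) :
    ∀ᵐ k ∂(volume : Measure (ι → ℝ)), k ∉ specSet M {g | ¬ Function.Injective g} := by
  rcases isEmpty_or_nonempty ι with hι | hι
  · refine Filter.Eventually.of_forall ?_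
    rintro k ⟨g, hg, -⟩
    exact hg (Function.injective_of_subsingleton g)
  set v : ι → ℝ := fun i => (Fintype.equivFin ι i : ℕ) with hv
  have hvinj : Function.Injective v := fun i j h =>
    (Fintype.equivFin ι).injective (Fin.ext (Nat.cast_injective h))
  refine ae_notMem_of_countable_line (measurableSet_specSet M isClosed_not_injective) v
    fun k => ?_
  have hD : (Matrix.diagonal v).charpoly.Separable := by
    rw [Matrix.charpoly_diagonal, separable_prod_X_sub_C_iff]
    exact hvinj
  have hfin := finite_not_separable_charpoly_smul_add (M + Matrix.diagonal k) _ hD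
  refine ((hfin.image fun s => s⁻¹).insert 0).countable.mono ?_
  rintro t ⟨g, hg, hchar⟩
  by_cases ht : t = 0
  · exact Or.inl ht
  refine Or.inr ⟨t⁻¹, ?_, inv_inv t⟩
  have h1 : t⁻¹ • (M + Matrix.diagonal k) + Matrix.diagonal v =
      t⁻¹ • (M + Matrix.diagonal (k + t • v)) := by
    ext i j
    by_cases hij : i = j
    · subst hij
      simp only [Matrix.add_apply, Matrix.smul_apply, Matrix.diagonal_apply_eq, Pi.add_apply,
        Pi.smul_apply, smul_eq_mul]
      field_simp
      ring
    · simp [hij]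
  rw [Set.mem_ofPred_eq, h1, charpoly_smul_eq_prod (inv_ne_zero ht) hchar,
    separable_prod_X_sub_C_iff]
  exact fun h => hg fun i j hij => h (by simp only [hij])

/-- For almost every potential, the square roots of the eigenvalues of the symmetric matrix
`M + diag k` violate a given nontrivial linear relation. -/
theorem ae_notMem_specSet_sum_mul_sqrt {M : Matrix ι ι ℝ} (hM : M.IsHermitian) {c : ι → ℝ}
    (hc : c ≠ 0) : ∀ᵐ k ∂(volume : Measure (ι → ℝ)),
      k ∉ specSet M {g | (∀ j, 0 ≤ g j) ∧ ∑ j, c j * √(g j) = 0} := by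
  have hcl : IsClosed {g : ι → ℝ | (∀ j, 0 ≤ g j) ∧ ∑ j, c j * √(g j) = 0} := by
    simp only [Set.ofPred_and, Set.ofPred_forall]
    refine (isClosed_iInter fun j => ?_).inter (isClosed_eq (by fun_prop) continuous_const)
    exact isClosed_le continuous_const (continuous_apply j)
  have hdiff := ae_notMem_of_countable_line ((measurableSet_specSet M hcl).diff
    (measurableSet_specSet M isClosed_not_injective)) 1 fun k => ?_
  · filter_upwards [hdiff, ae_notMem_specSet_not_injective M] with k h1 h2 h3
    exact h1 ⟨h3, h2⟩
  have hherm : (M + Matrix.diagonal k).IsHermitian := hM.add (Matrix.isHermitian_diagonal k)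
  set μ := hherm.eigenvalues with hμ
  have hμchar : (M + Matrix.diagonal k).charpoly = ∏ j, (X - C (μ j)) := by
    simpa using hherm.charpoly_eq
  refine (Set.countable_iUnion fun σ : {σ : ι → ι // Function.Injective (μ ∘ σ)} =>
    countable_sum_mul_sqrt_add_eq_zero σ.2 hc).mono ?_
  rintro s ⟨⟨g, ⟨hg0, hgsum⟩, hg⟩, hsimple⟩
  have hginj : Function.Injective g := by
    by_contra hcon
    exact hsimple ⟨g, hcon, hg⟩
  have hshift : M + Matrix.diagonal (k + s • 1) =
      M + Matrix.diagonal k + Matrix.scalar ι s := by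
    ext i j
    by_cases hij : i = j
    · subst hij; simp [add_assoc]
    · simp [hij]
  rw [hshift, charpoly_add_scalar_eq_prod s hμchar] at hg
  have hroot (j : ι) : ∃ i, g j = μ i + s := by
    have h1 := congrArg (eval (g j)) hg
    simp only [eval_prod, eval_sub, eval_X, eval_C] at h1
    obtain ⟨i, -, hi⟩ := Finset.prod_eq_zero_iff.1
      (h1.trans (Finset.prod_eq_zero (Finset.mem_univ j) (sub_self (g j))))
    exact ⟨i, sub_eq_zero.1 hi⟩
  choose σ hσ using hroot
  have hσinj : Function.Injective (μ ∘ σ) := fun i j hij => hginj (by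
    rw [hσ i, hσ j]
    exact congrArg (· + s) hij)
  refine Set.mem_iUnion.2 ⟨⟨σ, hσinj⟩, fun j => ?_, ?_⟩
  · simpa [hσ] using hg0 j
  · simpa [hσ] using hgsum

end Spectrum

theorem eigval_nonneg {a b : Fin ν → ℤ} {k : Box a b → ℝ} (hk : ∀ x, 0 < k x) (j : Box a b) :
    0 ≤ eigval a b k j := by
  have hev : Module.End.HasEigenvalue (Matrix.toLin' (effH a b k)) (eigval a b k j) := by
    rw [Module.End.hasEigenvalue_iff_mem_spectrum, Matrix.spectrum_toLin']
    exact (effH_isHermitian a b k).eigenvalues_mem_spectrum_real j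
  obtain ⟨x, hx⟩ := eigenvalue_mem_ball hev
  rw [Metric.mem_closedBall, Real.dist_eq] at hx
  have hself : dist1 x.1 x.1 ≠ 1 := by simp [dist1]
  have hdiag : effH a b k x x =
      ((Finset.univ.filter fun z : Box a b => dist1 x.1 z.1 = 1).card : ℝ) + k x := by
    simp [effH, h0]
  have hoff : ∑ y ∈ Finset.univ.erase x, ‖effH a b k x y‖ =
      ((Finset.univ.filter fun z : Box a b => dist1 x.1 z.1 = 1).card : ℝ) := by
    rw [Finset.card_filter, Nat.cast_sum, ← Finset.add_sum_erase _ _ (Finset.mem_univ x)]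
    simp only [hself, if_false, Nat.cast_zero, zero_add]
    refine Finset.sum_congr rfl fun y hy => ?_
    have hxy : x ≠ y := (Finset.ne_of_mem_erase hy).symm
    by_cases h : dist1 x.1 y.1 = 1 <;> simp [effH, h0, hxy, h]
  rw [hdiag, hoff] at hx
  have := (abs_le.1 hx).1
  have := hk x
  linarith

/-- STATEMENT 14: for Lebesgue-almost every positive potential `k` the map
`α ↦ Σ_j γ_j(k)(2α_j + 1)` is injective, i.e. the many-body oscillator Hamiltonian
`H(k)` has simple spectrum; equivalently the `γ_j(k)` are rationally independent. -/
theorem almost_sure_simple_spectrum {ν : ℕ} (hν : 1 ≤ ν) (a b : Fin ν → ℤ) :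
    ∀ᵐ k ∂(volume : Measure (Box a b → ℝ)), (∀ x, 0 < k x) →
      (Function.Injective fun α : Box a b → ℕ =>
          ∑ j : Box a b, gam a b k j * (2 * (α j : ℝ) + 1)) ∧
        LinearIndependent ℚ fun j : Box a b => gam a b k j := by
  have hae : ∀ᵐ k ∂(volume : Measure (Box a b → ℝ)), ∀ c : {c : Box a b → ℚ // c ≠ 0},
      k ∉ specSet (h0 a b) {g | (∀ j, 0 ≤ g j) ∧ ∑ j, (c.1 j : ℝ) * √(g j) = 0} := by
    refine ae_all_iff.2 fun c => ae_notMem_specSet_sum_mul_sqrt (h0_isHermitian a b) ?_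
    refine fun h => c.2 (funext fun j => ?_)
    exact Rat.cast_eq_zero.1 (congrFun h j)
  filter_upwards [hae] with k hk hpos
  have hlin : LinearIndependent ℚ fun j : Box a b => gam a b k j := by
    rw [Fintype.linearIndependent_iff]
    intro c hc
    by_contra hne
    refine hk ⟨c, fun h => hne fun i => congrFun h i⟩
      ⟨eigval a b k, ⟨eigval_nonneg hpos, ?_⟩, ?_⟩
    · simpa [Rat.smul_def, gam] using hc
    · exact (effH_isHermitian a b k).charpoly_eq
  refine ⟨fun α β hαβ => ?_, hlin⟩
  rw [Fintype.linearIndependent_iff] at hlin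
  have hzero := hlin (fun j => (α j : ℚ) - β j) (by
    have h1 : ∑ j, gam a b k j * (2 * (α j : ℝ) + 1) =
        ∑ j, gam a b k j * (2 * (β j : ℝ) + 1) := hαβ
    rw [← sub_eq_zero, ← Finset.sum_sub_distrib] at h1
    have h2 : ∑ j, 2 * (((α j : ℚ) - β j) • gam a b k j) = 0 := by
      rw [← h1]
      refine Finset.sum_congr rfl fun j _ => ?_
      rw [Rat.smul_def]
      push_cast
      ring
    rw [← Finset.mul_sum] at h2
    exact (mul_eq_zero.1 h2).resolve_left two_ne_zero)
  funext j
  have := sub_eq_zero.1 (hzero j)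
  exact_mod_cast this

end OscLoc
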